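/- If a bidirected graph G_τ contains no b-circuit, then its transitive closure Ft(G_τ) contains no b-circuit. -/

import Mathlib

/-- A signed vertex `x^α` : a vertex together with a sign in `ℤˣ`. -/
abbrev SV (V : Type) := V × ℤˣ

/-- A dart : an ordered signed edge `(x^α, y^β)`, traversed from `x` (entered with
half-edge sign `α`) to `y` (left with half-edge sign `β`). -/
abbrev BDart (V : Type) := SV V × SV V

/-- A bidirected graph on the vertex set `V`, given as its set of (unordered) signed
edges `{x^α, y^β}`; the half-edge of such an edge at `x` has sign `α` and the
half-edge at `y` has sign `β`. -/
abbrev BGraph (V : Type) := Set (Sym2 (SV V))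

/-- `IsWalk G x l y` : the list of darts `l` forms a chain from `x` to `y` in `G`. -/
def IsWalk {V : Type} (G : BGraph V) : V → List (BDart V) → V → Prop
  | x, [], y => x = y
  | x, d :: l, y => d.1.1 = x ∧ Sym2.mk d.1 d.2 ∈ G ∧ IsWalk G d.2.1 l y

/-- `IsBWalk G x α l y β` : `l` is a b-walk from `x^α` to `y^β` : a nonempty chain
from `x` to `y` whose first half-edge sign at `x` is `α`, whose last half-edge sign
at `y` is `β`, and such that at every internal vertex occurrence the two incident
half-edge signs sum to `0`. -/
def IsBWalk {V : Type} (G : BGraph V) (x : V) (α : ℤˣ) (l : List (BDart V)) (y : V)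
    (β : ℤˣ) : Prop :=
  l ≠ [] ∧ IsWalk G x l y ∧ (∀ d ∈ l.head?, d.1.2 = α) ∧ (∀ d ∈ l.getLast?, d.2.2 = β) ∧
    List.Chain' (fun d d' => ((d.2.2 : ℤ) + (d'.1.2 : ℤ) = 0)) l

/-- `IsBPath G x α l y β` : `l` is a b-path from `x^α` to `y^β` : a b-walk from `x^α`
to `y^β` that is minimal, i.e. no proper subsequence of its darts, taken in the same
order, is a b-walk from `x^α` to `y^β`. -/
def IsBPath {V : Type} (G : BGraph V) (x : V) (α : ℤˣ) (l : List (BDart V)) (y : V)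
    (β : ℤˣ) : Prop :=
  IsBWalk G x α l y β ∧ ∀ l', l'.Sublist l → l' ≠ l → ¬ IsBWalk G x α l' y β

/-- The transitive closure `Ft G` : its edges are the edges `{x^α, y^β}` for which
`G` contains a b-path from `x^α` to `y^β`. -/
def Ft {V : Type} (G : BGraph V) : BGraph V :=
  {e | ∃ x α y β l, IsBPath G x α l y β ∧ e = Sym2.mk (x, α) (y, β)}

/-- The transitive closure `ft G H` of the partial graph `H` within `G` : the edges
of `H` together with every edge `{x^α, y^β}` of `G` for which `H` contains a b-path
from `x^α` to `y^β`. -/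
def ft {V : Type} (G H : BGraph V) : BGraph V :=
  H ∪ {e | e ∈ G ∧ ∃ x α y β l, IsBPath H x α l y β ∧ e = Sym2.mk (x, α) (y, β)}

/-- `IsTR G H` : `H` is a transitive reduction of `G` : a partial graph of `G`
minimal with the property `ft G H = G`. -/
def IsTR {V : Type} (G H : BGraph V) : Prop :=
  H ⊆ G ∧ ft G H = G ∧ ∀ H', H' ⊂ H → ft G H' ≠ G

/-- A bidirected graph has no b-circuit if it contains no b-path from `x^α` to
`x^{-α}` for any vertex `x` and sign `α`. -/
def NoBCircuit {V : Type} (G : BGraph V) : Prop :=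
  ¬ ∃ (x : V) (α : ℤˣ) (l : List (BDart V)), IsBPath G x α l x (-α)

theorem isBWalk_cons {V : Type} (G : BGraph V) (x : V) (α : ℤˣ) (d : BDart V)
    (l : List (BDart V)) (y : V) (β : ℤˣ) :
    IsBWalk G x α (d :: l) y β ↔ d.1 = (x, α) ∧ Sym2.mk d.1 d.2 ∈ G ∧
      ((l = [] ∧ d.2 = (y, β)) ∨ IsBWalk G d.2.1 (-d.2.2) l y β) := by
  have key : ∀ a b : ℤˣ, ((a : ℤ) + (b : ℤ) = 0) ↔ b = -a := by decide
  obtain ⟨⟨a, s⟩, ⟨b, t⟩⟩ := d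
  cases l with
  | nil =>
    simp only [IsBWalk, IsWalk, List.Chain', List.isChain_singleton, Option.mem_def, List.head?_cons, Option.some.injEq, forall_eq',
      List.getLast?_singleton, List.getLast?_cons_cons, Prod.mk.injEq, ne_eq, reduceCtorEq,
      not_false_eq_true, true_and, false_and, false_or, not_true_eq_false, or_false, and_true]
    tauto
  | cons e l =>
    simp only [IsBWalk, IsWalk, List.Chain', List.isChain_cons_cons, key, Option.mem_def, List.head?_cons, Option.some.injEq, forall_eq',
      List.getLast?_singleton, List.getLast?_cons_cons, Prod.mk.injEq, ne_eq, reduceCtorEq,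
      not_false_eq_true, true_and, false_and, false_or, not_true_eq_false, or_false, and_true]
    tauto

/-- Existence of a b-walk, inductively. -/
inductive BReach {V : Type} (G : BGraph V) : SV V → SV V → Prop
  | single {p q : SV V} : Sym2.mk p q ∈ G → BReach G p q
  | cons {p q r : SV V} : Sym2.mk p q ∈ G → BReach G (q.1, -q.2) r → BReach G p r

theorem BReach.of_walk {V : Type} {G : BGraph V} {y : V} {β : ℤˣ} (l : List (BDart V)) :
    ∀ {x : V} {α : ℤˣ}, IsBWalk G x α l y β → BReach G (x, α) (y, β) := by
  induction l with
  | nil => intro x α h; exact absurd rfl h.1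
  | cons d l ih =>
    intro x α h
    rw [isBWalk_cons] at h
    obtain ⟨h1, h2, ⟨-, h3⟩ | h3⟩ := h
    · rw [h1, h3] at h2; exact .single h2
    · rw [h1] at h2; exact .cons h2 (ih h3)

theorem BReach.exists_walk {V : Type} {G : BGraph V} {p q : SV V} (h : BReach G p q) :
    ∃ l, IsBWalk G p.1 p.2 l q.1 q.2 := by
  induction h with
  | @single p q h => exact ⟨[(p, q)], (isBWalk_cons ..).2 ⟨rfl, h, .inl ⟨rfl, rfl⟩⟩⟩
  | @cons p q r h _ ih =>
    obtain ⟨l, hl⟩ := ih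
    exact ⟨(p, q) :: l, (isBWalk_cons ..).2 ⟨rfl, h, .inr hl⟩⟩

theorem BReach.trans {V : Type} {G : BGraph V} {p q r : SV V} (h : BReach G p q)
    (h' : BReach G (q.1, -q.2) r) : BReach G p r := by
  induction h with
  | single h => exact .cons h h'
  | cons h _ ih => exact .cons h (ih h')

theorem BReach.symm {V : Type} {G : BGraph V} {p q : SV V} (h : BReach G p q) :
    BReach G q p := by
  induction h with
  | single h => exact .single (by rwa [Sym2.eq_swap])
  | @cons p q r h _ ih =>
    refine ih.trans (.single ?_)
    rw [Sym2.eq_swap]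
    simpa using h

theorem BReach.of_Ft {V : Type} {G : BGraph V} {p q : SV V} (h : BReach (Ft G) p q) :
    BReach G p q := by
  have edge : ∀ p q : SV V, Sym2.mk p q ∈ Ft G → BReach G p q := by
    rintro p q ⟨x, α, y, β, l, hl, he⟩
    have hr := BReach.of_walk l hl.1
    rcases Sym2.eq_iff.1 he with ⟨rfl, rfl⟩ | ⟨rfl, rfl⟩
    · exact hr
    · exact hr.symm
  induction h with
  | single h => exact edge _ _ h
  | cons h _ ih => exact (edge _ _ h).trans ih

theorem exists_path {V : Type} {G : BGraph V} {x y : V} {α β : ℤˣ} (n : ℕ) :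
    ∀ l : List (BDart V), l.length = n → IsBWalk G x α l y β → ∃ l', IsBPath G x α l' y β := by
  induction n using Nat.strong_induction_on with
  | _ n ih =>
    intro l hn hl
    by_cases hm : ∃ l', l'.Sublist l ∧ l' ≠ l ∧ IsBWalk G x α l' y β
    · obtain ⟨l', h1, h2, h3⟩ := hm
      have hlt : l'.length < n := by
        rw [← hn]
        exact lt_of_le_of_ne h1.length_le (fun h => h2 (h1.eq_of_length h))
      exact ih _ hlt l' rfl h3
    · exact ⟨l, hl, fun l' h1 h2 h3 => hm ⟨l', h1, h2, h3⟩⟩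

/-- If a bidirected graph `G` contains no b-circuit, then its
transitive closure `Ft G` contains no b-circuit. -/
theorem stmt17 {V : Type} [Fintype V] (G : BGraph V) (h : NoBCircuit G) :
    NoBCircuit (Ft G) := by
  rintro ⟨x, α, l, hl⟩
  obtain ⟨l', hl'⟩ := (BReach.of_walk l hl.1).of_Ft.exists_walk
  obtain ⟨m, hm⟩ := exists_path _ l' rfl hl'
  exact h ⟨x, α, m, hm⟩
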